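/- Let ϑ₁, ϑ₂ be Beurling weights on ℝ^d and 1 ≤ p, q, r < ∞. For every f ∈ A^{p,1,q,r}_{ϑ₁,ϑ₂}(ℝ^d), the map y ↦ T_y f is continuous from ℝ^d into A^{p,1,q,r}_{ϑ₁,ϑ₂}(ℝ^d); in particular, for every ε > 0 there is a neighbourhood U of 0 in ℝ^d such that ‖T_y f − f‖_A < ε for all y ∈ U. -/

import Mathlib

open MeasureTheory Filter Topology
open scoped ENNReal NNReal BigOperators

noncomputable section

/-- The unit cube `α + [0,1)^d` at the integer point `α ∈ ℤ^d`. -/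
def cube {d : ℕ} (α : Fin d → ℤ) : Set (Fin d → ℝ) :=
  Set.univ.pi fun i => Set.Ico (α i : ℝ) ((α i : ℝ) + 1)

/-- The weighted amalgam norm `‖f‖_{pq,ω}` of the space `(L^p_ω, ℓ^q)`. -/
def amalgamNorm {d : ℕ} (p q : ℝ) (ω : (Fin d → ℝ) → ℝ) (f : (Fin d → ℝ) → ℂ) : ℝ≥0∞ :=
  (∑' α : Fin d → ℤ,
      (eLpNorm (fun x => ω x • f x) (ENNReal.ofReal p) (volume.restrict (cube α))) ^ q) ^ (1 / q)

/-- Membership in the weighted amalgam space `(L^p_ω, ℓ^q)`. -/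
def MemAmalgam {d : ℕ} (p q : ℝ) (ω : (Fin d → ℝ) → ℝ) (f : (Fin d → ℝ) → ℂ) : Prop :=
  Measurable f ∧ amalgamNorm p q ω f < ⊤

/-- A Beurling weight: measurable, `ϑ ≥ 1` and submultiplicative. -/
def IsBeurling {d : ℕ} (ϑ : (Fin d → ℝ) → ℝ) : Prop :=
  Measurable ϑ ∧ (∀ x, 1 ≤ ϑ x) ∧ ∀ x y, ϑ (x + y) ≤ ϑ x * ϑ y

/-- The Fourier transform `f̂(ξ) = ∫ f(x) e^{-2πi⟨x,ξ⟩} dx`. -/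
def fourierT {d : ℕ} (f : (Fin d → ℝ) → ℂ) (ξ : Fin d → ℝ) : ℂ :=
  ∫ x : Fin d → ℝ,
    Complex.exp (-(2 * (Real.pi : ℂ) * Complex.I * ∑ i, (x i : ℂ) * (ξ i : ℂ))) * f x

/-- The norm of `A^{p,1,q,r}_{ϑ₁,ϑ₂}(ℝ^d)`. -/
def ANorm {d : ℕ} (p q r : ℝ) (ϑ₁ ϑ₂ : (Fin d → ℝ) → ℝ) (f : (Fin d → ℝ) → ℂ) : ℝ≥0∞ :=
  amalgamNorm p 1 ϑ₁ f + amalgamNorm q r ϑ₂ (fourierT f)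

/-- Membership in `A^{p,1,q,r}_{ϑ₁,ϑ₂}(ℝ^d)`. -/
def MemA {d : ℕ} (p q r : ℝ) (ϑ₁ ϑ₂ : (Fin d → ℝ) → ℝ) (f : (Fin d → ℝ) → ℂ) : Prop :=
  MemAmalgam p 1 ϑ₁ f ∧ MemAmalgam q r ϑ₂ (fourierT f)

/-- Convolution `(f∗g)(x) = ∫ f(x−t)g(t) dt`. -/
def convF {d : ℕ} (f g : (Fin d → ℝ) → ℂ) (x : Fin d → ℝ) : ℂ :=
  ∫ t : Fin d → ℝ, f (x - t) * g t

/-- `ϑ ≺ ϑ'` : domination of weights up to a constant. -/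
def Prec {d : ℕ} (ϑ ϑ' : (Fin d → ℝ) → ℝ) : Prop :=
  ∃ C : ℝ, 0 < C ∧ ∀ x, ϑ x ≤ C * ϑ' x

/-- The Beurling–Domar condition `∑_{n≥1} log ϑ(nx)/n² < ∞`. -/
def BeurlingDomar {d : ℕ} (ϑ : (Fin d → ℝ) → ℝ) : Prop :=
  ∀ x : Fin d → ℝ, Summable fun n : ℕ => Real.log (ϑ ((n : ℝ) • x)) / (n : ℝ) ^ 2

/-- `w` does not tend to zero as `|x| → ∞`. -/
def NotVanishingAtInfty {d : ℕ} (w : (Fin d → ℝ) → ℝ) : Prop :=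
  ∃ δ : ℝ, 0 < δ ∧ ∀ R : ℝ, 0 < R → ∃ x : Fin d → ℝ, R < ‖x‖ ∧ δ ≤ w x

end

/-!
Both summands of the norm tend to `0` by dominated convergence over the unit cubes.

A measurable submultiplicative weight is locally bounded, by Steinhaus' theorem. A translate by `y`
near `y₀` moves a cube into boundedly many neighbouring ones, so `ϑ₁ (x + y) ≤ ϑ₁ x * ϑ₁ y` bounds
the local norms of `T_y f` by finite sums of shifted local norms of `f`, uniformly in `y`. On a
fixed cube, only the truncation of `f` to a bounded set matters, and there convergence is the
continuity of translation in `L^p`.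

On the Fourier side, `T_y` becomes multiplication by the character `e^{-2πi⟨y,ξ⟩}`, which is
bounded by `1` and depends continuously on `y`.
-/

section General

lemma tendsto_ennreal_tsum_of_dominated {X ι : Type*} [Countable ι] {l : Filter X}
    [l.IsCountablyGenerated] {F : X → ι → ℝ≥0∞} {a : ι → ℝ≥0∞} (bound : ι → ℝ≥0∞)
    (hbound : ∑' i, bound i ≠ ⊤) (hF : ∀ᶠ y in l, ∀ i, F y i ≤ bound i)
    (hlim : ∀ i, Tendsto (fun y => F y i) l (𝓝 (a i))) :
    Tendsto (fun y => ∑' i, F y i) l (𝓝 (∑' i, a i)) := by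
  let : MeasurableSpace ι := ⊤
  have : MeasurableSingletonClass ι := ⟨fun _ => trivial⟩
  simp only [← lintegral_count] at hbound ⊢
  exact tendsto_lintegral_filter_of_dominated_convergence bound
    (.of_forall fun _ => measurable_from_top) (hF.mono fun _ hy => .of_forall hy) hbound
    (.of_forall hlim)

lemma ennreal_rpow_sum_le {ι : Type*} (S : Finset ι) (a : ι → ℝ≥0∞) {q : ℝ} (hq : 0 < q) :
    (∑ i ∈ S, a i) ^ q ≤ (S.card : ℝ≥0∞) ^ q * ∑ i ∈ S, a i ^ q := by
  have hle : ∀ i ∈ S, a i ≤ (∑ j ∈ S, a j ^ q) ^ q⁻¹ := fun i hi =>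
    (ENNReal.le_rpow_inv_iff hq).2 (Finset.single_le_sum (f := fun j => a j ^ q)
      (fun _ _ => zero_le) hi)
  calc (∑ i ∈ S, a i) ^ q ≤ (S.card * (∑ j ∈ S, a j ^ q) ^ q⁻¹) ^ q := by
        gcongr
        simpa only [nsmul_eq_mul] using Finset.sum_le_card_nsmul S a _ hle
    _ = (S.card : ℝ≥0∞) ^ q * ∑ i ∈ S, a i ^ q := by
        rw [ENNReal.mul_rpow_of_nonneg _ _ hq.le, ENNReal.rpow_inv_rpow hq.ne']

lemma tsum_rpow_sum_add_ne_top {ι : Type*} [AddGroup ι] {a : ι → ℝ≥0∞} {q : ℝ} (hq : 0 < q)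
    (ha : ∑' i, a i ^ q ≠ ⊤) (S : Finset ι) : ∑' i, (∑ s ∈ S, a (i + s)) ^ q ≠ ⊤ := by
  refine ne_top_of_le_ne_top ?_
    (ENNReal.tsum_le_tsum fun i => ennreal_rpow_sum_le S (fun s => a (i + s)) hq)
  have hshift (s : ι) : ∑' i, a (i + s) ^ q = ∑' i, a i ^ q :=
    (Equiv.addRight s).tsum_eq fun i => a i ^ q
  rw [ENNReal.tsum_mul_left, Summable.tsum_finsetSum fun _ _ => ENNReal.summable]
  simp only [hshift, Finset.sum_const, nsmul_eq_mul]
  finiteness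

lemma bddAbove_image_of_isCompact {X β : Type*} [TopologicalSpace X] [Preorder β]
    [IsDirectedOrder β] [Nonempty β] {f : X → β} {K : Set X} (hK : IsCompact K)
    (hf : ∀ x ∈ K, ∃ C, ∀ᶠ y in 𝓝[K] x, f y ≤ C) : BddAbove (f '' K) := by
  refine hK.induction_on (p := fun s => BddAbove (f '' s)) (by simp)
    (fun s t hst ht => ht.mono (Set.image_mono hst))
    (fun s t hs ht => by simpa only [Set.image_union] using hs.union ht) fun x hx => ?_
  obtain ⟨C, hC⟩ := hf x hx
  exact ⟨_, hC, C, Set.forall_mem_image.2 fun _ hy => hy⟩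

variable {X E : Type*} [MeasurableSpace X] [NormedAddCommGroup E] {μ : Measure X} {P : ℝ≥0∞}

lemma tendsto_eLpNorm_zero_of_dominated {Y : Type*} {l : Filter Y} [l.IsCountablyGenerated]
    (hP₀ : P ≠ 0) (hP : P ≠ ⊤) {F : Y → X → E} {bound : X → ℝ} (hbound : MemLp bound P μ)
    (hmeas : ∀ᶠ y in l, AEStronglyMeasurable (F y) μ)
    (hF : ∀ᶠ y in l, ∀ᵐ x ∂μ, ‖F y x‖ ≤ bound x)
    (hlim : ∀ᵐ x ∂μ, Tendsto (fun y => F y x) l (𝓝 0)) :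
    Tendsto (fun y => eLpNorm (F y) P μ) l (𝓝 0) := by
  have hP' : 0 < P.toReal := ENNReal.toReal_pos hP₀ hP
  have hlint : Tendsto (fun y => ∫⁻ x, ‖F y x‖ₑ ^ P.toReal ∂μ) l (𝓝 (∫⁻ _, 0 ∂μ)) := by
    refine tendsto_lintegral_filter_of_dominated_convergence' (fun x => ‖bound x‖ₑ ^ P.toReal)
      (hmeas.mono fun y hy => hy.enorm.pow_const _) (hF.mono fun y hy => hy.mono fun x hx => ?_)
      ((eLpNorm_lt_top_iff_lintegral_rpow_enorm_lt_top hP₀ hP).1 hbound.2).ne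
      (hlim.mono fun x hx => ?_)
    · gcongr
      exact enorm_le_iff_norm_le.2 (hx.trans (le_abs_self _))
    · simpa [hP'] using hx.enorm.ennrpow_const P.toReal
  simpa only [eLpNorm_eq_lintegral_rpow_enorm_toReal hP₀ hP, lintegral_zero,
    ENNReal.zero_rpow_of_pos (one_div_pos.2 hP')] using hlint.ennrpow_const (1 / P.toReal)

lemma eLpNorm_restrict_union_le (hP : 1 ≤ P) {g : X → E} (hg : AEStronglyMeasurable g μ)
    {A B : Set X} (hA : MeasurableSet A) (hB : MeasurableSet B) :
    eLpNorm g P (μ.restrict (A ∪ B)) ≤ eLpNorm g P (μ.restrict A) + eLpNorm g P (μ.restrict B) := by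
  have hBA : MeasurableSet (B \ A) := hB.diff hA
  calc eLpNorm g P (μ.restrict (A ∪ B))
      = eLpNorm (A.indicator g + (B \ A).indicator g) P μ := by
        rw [← Set.union_sdiff_self, ← eLpNorm_indicator_eq_eLpNorm_restrict (hA.union hBA),
          Set.indicator_union_of_disjoint Set.disjoint_sdiff_right]
        rfl
    _ ≤ eLpNorm (A.indicator g) P μ + eLpNorm ((B \ A).indicator g) P μ :=
        eLpNorm_add_le (hg.indicator hA) (hg.indicator hBA) hP
    _ ≤ eLpNorm g P (μ.restrict A) + eLpNorm g P (μ.restrict B) := by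
        rw [eLpNorm_indicator_eq_eLpNorm_restrict hA, eLpNorm_indicator_eq_eLpNorm_restrict hBA]
        gcongr
        exact Set.sdiff_subset

lemma eLpNorm_restrict_biUnion_le {ι : Type*} (hP : 1 ≤ P) {g : X → E}
    (hg : AEStronglyMeasurable g μ) (S : Finset ι) {A : ι → Set X}
    (hA : ∀ i, MeasurableSet (A i)) :
    eLpNorm g P (μ.restrict (⋃ i ∈ S, A i)) ≤ ∑ i ∈ S, eLpNorm g P (μ.restrict (A i)) := by
  classical
  induction S using Finset.induction_on with
  | empty => simp
  | insert i S hi ih =>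
    rw [Finset.set_biUnion_insert, Finset.sum_insert hi]
    exact (eLpNorm_restrict_union_le hP hg (hA i) (S.measurableSet_biUnion fun j _ => hA j)).trans
      (by gcongr)

end General

section Translation

variable {G E : Type*} [MeasurableSpace G] [NormedAddCommGroup E] {μ : Measure G} {P : ℝ≥0∞}

lemma eLpNorm_comp_sub_right_restrict_le [AddGroup G] [MeasurableAdd G] [μ.IsAddRightInvariant]
    {g : G → E} {A B : Set G} {y : G} (hB : MeasurableSet B)
    (hg : AEStronglyMeasurable g (μ.restrict B)) (hAB : ∀ x ∈ A, x - y ∈ B) :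
    eLpNorm (fun x => g (x - y)) P (μ.restrict A) ≤ eLpNorm g P (μ.restrict B) :=
  calc eLpNorm (fun x => g (x - y)) P (μ.restrict A)
      ≤ eLpNorm (fun x => g (x - y)) P (μ.restrict ((· - y) ⁻¹' B)) :=
        eLpNorm_mono_measure _ (Measure.restrict_mono_set μ hAB)
    _ = eLpNorm g P (μ.restrict B) :=
        eLpNorm_comp_measurePreserving hg
          ((measurePreserving_sub_right μ y).restrict_preimage hB)

lemma tendsto_eLpNorm_translate_sub [AddCommGroup G] [TopologicalSpace G]
    [IsTopologicalAddGroup G] [BorelSpace G] [IsLocallyFiniteMeasure μ] [μ.InnerRegularCompactLTTop]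
    [μ.IsAddLeftInvariant] (hP : 1 ≤ P) (hP' : P ≠ ⊤) {f : G → E} (hf : MemLp f P μ) (y₀ : G) :
    Tendsto (fun y => eLpNorm (fun x => f (x - y) - f (x - y₀)) P μ) (𝓝 y₀) (𝓝 0) := by
  have : Fact (1 ≤ P) := ⟨hP⟩
  have : Fact (P ≠ ⊤) := ⟨hP'⟩
  have hcont : Continuous fun y : G => DomAddAct.mk (-y) +ᵥ hf.toLp f :=
    (DomAddAct.continuous_mk.comp continuous_neg).vadd continuous_const
  refine (tendsto_iff_edist_tendsto_0.1 (hcont.tendsto y₀)).congr fun y => ?_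
  rw [DomAddAct.mk_vadd_toLp, DomAddAct.mk_vadd_toLp, Lp.edist_toLp_toLp]
  congr 1
  ext x
  simp [sub_eq_neg_add]

end Translation

namespace IsBeurling

open scoped Pointwise

variable {d : ℕ} {ϑ : (Fin d → ℝ) → ℝ}

lemma nonneg (h : IsBeurling ϑ) (x : Fin d → ℝ) : 0 ≤ ϑ x :=
  zero_le_one.trans (h.2.1 x)

lemma exists_eventually_le (h : IsBeurling ϑ) (y₀ : Fin d → ℝ) :
    ∃ C, ∀ᶠ y in 𝓝 y₀, ϑ y ≤ C := by
  let E (n : ℕ) : Set (Fin d → ℝ) := {x | ϑ x ≤ n ∧ ϑ (-x) ≤ n}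
  have hE (n : ℕ) : MeasurableSet (E n) :=
    (measurableSet_le h.1 measurable_const).inter
      (measurableSet_le (h.1.comp measurable_neg) measurable_const)
  have hcover : ⋃ n, E n = Set.univ := Set.eq_univ_of_forall fun x => by
    obtain ⟨n, hn⟩ := exists_nat_ge (max (ϑ x) (ϑ (-x)))
    exact Set.mem_iUnion.2 ⟨n, max_le_iff.1 hn⟩
  obtain ⟨n, hn⟩ : ∃ n, 0 < volume (E n) :=
    exists_measure_pos_of_not_measure_iUnion_null (hcover ▸ NeZero.ne _)
  -- Steinhaus: `E n - E n` is a neighbourhood of `0`, and `ϑ ≤ n * n` on it.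
  have hnhds : E n - E n ∈ 𝓝 (y₀ - y₀) := by
    simpa only [sub_self] using Measure.sub_mem_nhds_zero_of_addHaar_pos volume (E n) (hE n) hn
  refine ⟨ϑ y₀ * (n * n), ?_⟩
  filter_upwards [(continuous_sub_right y₀).tendsto y₀ hnhds]
  rintro y ⟨a, ha, b, hb, hab : a - b = y - y₀⟩
  calc ϑ y = ϑ (y₀ + (a + -b)) := by rw [← sub_eq_add_neg, hab, add_sub_cancel]
    _ ≤ ϑ y₀ * (ϑ a * ϑ (-b)) :=
        (h.2.2 _ _).trans (mul_le_mul_of_nonneg_left (h.2.2 _ _) (h.nonneg _))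
    _ ≤ ϑ y₀ * (n * n) := by
        gcongr
        exacts [h.nonneg _, h.nonneg _, ha.1, hb.2]

lemma bddAbove_image (h : IsBeurling ϑ) {K : Set (Fin d → ℝ)} (hK : IsCompact K) :
    BddAbove (ϑ '' K) :=
  bddAbove_image_of_isCompact hK fun x _ =>
    (h.exists_eventually_le x).imp fun _ hC => hC.filter_mono nhdsWithin_le_nhds

end IsBeurling

section Cube

variable {d : ℕ}

lemma mem_cube_iff {α : Fin d → ℤ} {x : Fin d → ℝ} : x ∈ cube α ↔ (fun i => ⌊x i⌋) = α := by
  simp [cube, funext_iff, Int.floor_eq_iff]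

lemma measurableSet_cube (α : Fin d → ℤ) : MeasurableSet (cube α) :=
  MeasurableSet.univ_pi fun _ => measurableSet_Ico

lemma volume_cube (α : Fin d → ℤ) : volume (cube α) = 1 := by
  simp [cube, volume_pi_pi]

lemma cube_subset_Icc (α : Fin d → ℤ) :
    cube α ⊆ Set.Icc (fun i => (α i : ℝ)) fun i => (α i : ℝ) + 1 :=
  fun _ hx => ⟨fun i => (hx i trivial).1, fun i => (hx i trivial).2.le⟩

lemma lintegral_eq_tsum_cube (μ : Measure (Fin d → ℝ)) (g : (Fin d → ℝ) → ℝ≥0∞) :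
    ∫⁻ x, g x ∂μ = ∑' α : Fin d → ℤ, ∫⁻ x in cube α, g x ∂μ := by
  have hcover : ⋃ α : Fin d → ℤ, cube α = Set.univ :=
    Set.eq_univ_of_forall fun x => Set.mem_iUnion.2 ⟨_, mem_cube_iff.2 rfl⟩
  have hdisj : Pairwise (Function.onFun Disjoint (cube (d := d))) := fun α β hαβ =>
    Set.disjoint_left.2 fun x hα hβ => hαβ ((mem_cube_iff.1 hα).symm.trans (mem_cube_iff.1 hβ))
  rw [← lintegral_iUnion measurableSet_cube hdisj, hcover, Measure.restrict_univ]

lemma exists_finset_sub_mem_cube (y₀ : Fin d → ℝ) : ∃ S : Finset (Fin d → ℤ),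
    ∀ᶠ y in 𝓝 y₀, ∀ α, ∀ x ∈ cube α, x - y ∈ ⋃ s ∈ S, cube (α + s) := by
  refine ⟨Finset.Icc (fun i => ⌊-y₀ i - 1⌋) (fun i => ⌊-y₀ i + 2⌋), ?_⟩
  filter_upwards [Metric.ball_mem_nhds y₀ one_pos] with y hy α x hx
  have hshift (i : Fin d) : ⌊(x - y) i⌋ - α i ∈ Set.Icc ⌊-y₀ i - 1⌋ ⌊-y₀ i + 2⌋ := by
    have hyi : |y i - y₀ i| < 1 := (dist_le_pi_dist y y₀ i).trans_lt hy
    obtain ⟨hlo, hhi⟩ := abs_lt.1 hyi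
    obtain ⟨hαx, hxα⟩ := hx i trivial
    rw [← Int.floor_sub_intCast, Pi.sub_apply]
    exact ⟨Int.floor_le_floor (by linarith), Int.floor_le_floor (by linarith)⟩
  refine Set.mem_iUnion₂.2 ⟨fun i => ⌊(x - y) i⌋ - α i,
    Finset.mem_Icc.2 ⟨fun i => (hshift i).1, fun i => (hshift i).2⟩, mem_cube_iff.2 ?_⟩
  ext i
  simp

end Cube

/-- The local norm `‖f·ω‖_{L^P(α+[0,1)^d)}`; the amalgam norm is the `ℓ^q` norm of these over
`α ∈ ℤ^d`. The exponent `P` is extended real, as in `eLpNorm`. -/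
noncomputable def cubeNorm {d : ℕ} (P : ℝ≥0∞) (ω : (Fin d → ℝ) → ℝ) (f : (Fin d → ℝ) → ℂ)
    (α : Fin d → ℤ) : ℝ≥0∞ :=
  eLpNorm (fun x => ω x • f x) P (volume.restrict (cube α))

section Amalgam

variable {d : ℕ} {p q : ℝ} {P : ℝ≥0∞} {ω ϑ : (Fin d → ℝ) → ℝ} {f g : (Fin d → ℝ) → ℂ}

lemma amalgamNorm_eq_tsum_cubeNorm : amalgamNorm p q ω f =
    (∑' α, cubeNorm (ENNReal.ofReal p) ω f α ^ q) ^ (1 / q) :=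
  rfl

lemma MemAmalgam.tsum_cubeNorm_rpow_ne_top (hf : MemAmalgam p q ω f) (hq : 0 < q) :
    ∑' α, cubeNorm (ENNReal.ofReal p) ω f α ^ q ≠ ⊤ :=
  ((ENNReal.rpow_lt_top_iff_of_pos (one_div_pos.2 hq)).1 hf.2).ne

lemma MemAmalgam.cubeNorm_ne_top (hf : MemAmalgam p q ω f) (hq : 0 < q) (α : Fin d → ℤ) :
    cubeNorm (ENNReal.ofReal p) ω f α ≠ ⊤ := fun htop =>
  ENNReal.ne_top_of_tsum_ne_top (hf.tsum_cubeNorm_rpow_ne_top hq) α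
    (by rw [htop, ENNReal.top_rpow_of_pos hq])

lemma eLpNorm_restrict_cube_le_cubeNorm (hω : ∀ x, 1 ≤ ω x) (α : Fin d → ℤ) :
    eLpNorm f P (volume.restrict (cube α)) ≤ cubeNorm P ω f α :=
  eLpNorm_mono fun x => by
    rw [norm_smul]
    exact le_mul_of_one_le_left (norm_nonneg _) ((hω x).trans (le_abs_self _))

lemma MemAmalgam.integrable (hp : 1 ≤ p) (hω : ∀ x, 1 ≤ ω x) (hf : MemAmalgam p 1 ω f) :
    Integrable f := by
  refine ⟨hf.1.aestronglyMeasurable, ?_⟩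
  have hcube (α : Fin d → ℤ) :
      ∫⁻ x in cube α, ‖f x‖ₑ ≤ cubeNorm (ENNReal.ofReal p) ω f α ^ (1 : ℝ) := by
    have : IsProbabilityMeasure (volume.restrict (cube α)) := ⟨by simp [volume_cube]⟩
    rw [ENNReal.rpow_one, ← eLpNorm_one_eq_lintegral_enorm]
    exact (eLpNorm_le_eLpNorm_of_exponent_le (ENNReal.one_le_ofReal.2 hp)
      hf.1.aestronglyMeasurable).trans (eLpNorm_restrict_cube_le_cubeNorm hω α)
  rw [HasFiniteIntegral, lintegral_eq_tsum_cube]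
  exact (ENNReal.tsum_le_tsum hcube).trans_lt (hf.tsum_cubeNorm_rpow_ne_top one_pos).lt_top

lemma tendsto_amalgamNorm_zero_of_dominated {Y : Type*} {l : Filter Y} [l.IsCountablyGenerated]
    (hq : 0 < q) {F : Y → (Fin d → ℝ) → ℂ} (bound : (Fin d → ℤ) → ℝ≥0∞)
    (hbound : ∑' α, bound α ^ q ≠ ⊤)
    (hF : ∀ᶠ y in l, ∀ α, cubeNorm (ENNReal.ofReal p) ω (F y) α ≤ bound α)
    (hlim : ∀ α, Tendsto (fun y => cubeNorm (ENNReal.ofReal p) ω (F y) α) l (𝓝 0)) :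
    Tendsto (fun y => amalgamNorm p q ω (F y)) l (𝓝 0) := by
  have hsum := tendsto_ennreal_tsum_of_dominated (fun α => bound α ^ q) hbound
    (hF.mono fun y hy α => ENNReal.rpow_le_rpow (hy α) hq.le)
    (fun α => (hlim α).ennrpow_const q)
  simpa only [amalgamNorm_eq_tsum_cubeNorm, ENNReal.zero_rpow_of_pos hq, tsum_zero,
    ENNReal.zero_rpow_of_pos (one_div_pos.2 hq)] using hsum.ennrpow_const (1 / q)

lemma cubeNorm_sub_le (hP : 1 ≤ P) (hω : Measurable ω) (hf : Measurable f) (hg : Measurable g)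
    (α : Fin d → ℤ) :
    cubeNorm P ω (fun x => f x - g x) α ≤ cubeNorm P ω f α + cubeNorm P ω g α := by
  simp only [cubeNorm, smul_sub]
  exact eLpNorm_sub_le (hω.smul hf).aestronglyMeasurable (hω.smul hg).aestronglyMeasurable hP

lemma cubeNorm_translate_le (hP : 1 ≤ P) (hϑ : IsBeurling ϑ) (hf : Measurable f)
    {S : Finset (Fin d → ℤ)} {y : Fin d → ℝ} {α : Fin d → ℤ}
    (hS : ∀ x ∈ cube α, x - y ∈ ⋃ s ∈ S, cube (α + s)) :
    cubeNorm P ϑ (fun x => f (x - y)) α ≤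
      ENNReal.ofReal (ϑ y) * ∑ s ∈ S, cubeNorm P ϑ f (α + s) := by
  have hg := (hϑ.1.smul hf).aestronglyMeasurable (μ := volume)
  have hpointwise (x : Fin d → ℝ) :
      ‖ϑ x • f (x - y)‖ ≤ ϑ y * ‖ϑ (x - y) • f (x - y)‖ := by
    rw [norm_smul, norm_smul, Real.norm_of_nonneg (hϑ.nonneg _),
      Real.norm_of_nonneg (hϑ.nonneg _), ← mul_assoc]
    gcongr
    simpa only [add_sub_cancel] using hϑ.2.2 y (x - y)
  calc cubeNorm P ϑ (fun x => f (x - y)) α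
      ≤ ENNReal.ofReal (ϑ y) *
          eLpNorm (fun x => ϑ (x - y) • f (x - y)) P (volume.restrict (cube α)) :=
        eLpNorm_le_mul_eLpNorm_of_ae_le_mul (.of_forall hpointwise) P
    _ ≤ ENNReal.ofReal (ϑ y) *
          eLpNorm (fun x => ϑ x • f x) P (volume.restrict (⋃ s ∈ S, cube (α + s))) := by
        gcongr
        exact eLpNorm_comp_sub_right_restrict_le (g := fun x => ϑ x • f x)
          (S.measurableSet_biUnion fun s _ => measurableSet_cube _) hg.restrict hS
    _ ≤ ENNReal.ofReal (ϑ y) * ∑ s ∈ S, cubeNorm P ϑ f (α + s) := by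
        gcongr
        exact eLpNorm_restrict_biUnion_le hP hg S fun s => measurableSet_cube _

lemma MemAmalgam.memLp_indicator_biUnion_cube (hp : 1 ≤ p) (hq : 0 < q) (hω : ∀ x, 1 ≤ ω x)
    (hf : MemAmalgam p q ω f) (S : Finset (Fin d → ℤ)) :
    MemLp ((⋃ α ∈ S, cube α).indicator f) (ENNReal.ofReal p) := by
  rw [memLp_indicator_iff_restrict (S.measurableSet_biUnion fun α _ => measurableSet_cube α)]
  refine ⟨hf.1.aestronglyMeasurable, ?_⟩
  calc eLpNorm f (ENNReal.ofReal p) (volume.restrict (⋃ α ∈ S, cube α))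
      ≤ ∑ α ∈ S, eLpNorm f (ENNReal.ofReal p) (volume.restrict (cube α)) :=
        eLpNorm_restrict_biUnion_le (ENNReal.one_le_ofReal.2 hp) hf.1.aestronglyMeasurable S
          measurableSet_cube
    _ < ⊤ := ENNReal.sum_lt_top.2 fun α _ =>
        (eLpNorm_restrict_cube_le_cubeNorm hω α).trans_lt (hf.cubeNorm_ne_top hq α).lt_top

lemma tendsto_cubeNorm_translate_sub (hp : 1 ≤ p) (hq : 0 < q) (hϑ : IsBeurling ϑ)
    (hf : MemAmalgam p q ϑ f) (y₀ : Fin d → ℝ) (α : Fin d → ℤ) :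
    Tendsto (fun y => cubeNorm (ENNReal.ofReal p) ϑ (fun x => f (x - y) - f (x - y₀)) α)
      (𝓝 y₀) (𝓝 0) := by
  obtain ⟨M, hM⟩ := hϑ.bddAbove_image (isCompact_Icc (a := fun i => (α i : ℝ))
    (b := fun i => (α i : ℝ) + 1))
  obtain ⟨S, hS⟩ := exists_finset_sub_mem_cube y₀
  -- On `cube α` the translates `T_y f` with `y` near `y₀` only see the truncation of `f` to `K`.
  let K : Set (Fin d → ℝ) := ⋃ β ∈ S.map (addLeftEmbedding α), cube β
  have hK : ∀ᶠ y in 𝓝 y₀, ∀ x ∈ cube α, x - y ∈ K := by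
    simpa [K] using hS.mono fun y hy => hy α
  have hmemLp : MemLp (K.indicator f) (ENNReal.ofReal p) :=
    hf.memLp_indicator_biUnion_cube hp hq hϑ.2.1 _
  have hlim := ENNReal.Tendsto.const_mul (a := ENNReal.ofReal M) (tendsto_eLpNorm_translate_sub
    (ENNReal.one_le_ofReal.2 hp) ENNReal.ofReal_ne_top hmemLp y₀) (.inr ENNReal.ofReal_ne_top)
  rw [mul_zero] at hlim
  refine tendsto_of_tendsto_of_tendsto_of_le_of_le' tendsto_const_nhds hlim
    (.of_forall fun _ => zero_le) ?_
  filter_upwards [hK] with y hy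
  have hpointwise : ∀ x ∈ cube α, ‖ϑ x • (f (x - y) - f (x - y₀))‖ ≤
      M * ‖K.indicator f (x - y) - K.indicator f (x - y₀)‖ := fun x hx => by
    rw [Set.indicator_of_mem (hy x hx), Set.indicator_of_mem (hK.self_of_nhds x hx), norm_smul,
      Real.norm_of_nonneg (hϑ.nonneg x)]
    gcongr
    exact hM (Set.mem_image_of_mem ϑ (cube_subset_Icc α hx))
  exact (eLpNorm_le_mul_eLpNorm_of_ae_le_mul
    (ae_restrict_of_forall_mem (measurableSet_cube α) hpointwise) _).trans
    (mul_le_mul_right (eLpNorm_restrict_le _ _ _ _) _)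

theorem tendsto_amalgamNorm_translate_sub (hp : 1 ≤ p) (hq : 0 < q) (hϑ : IsBeurling ϑ)
    (hf : MemAmalgam p q ϑ f) (y₀ : Fin d → ℝ) :
    Tendsto (fun y => amalgamNorm p q ϑ (fun x => f (x - y) - f (x - y₀))) (𝓝 y₀) (𝓝 0) := by
  have hP : 1 ≤ ENNReal.ofReal p := ENNReal.one_le_ofReal.2 hp
  obtain ⟨C, hC⟩ := hϑ.exists_eventually_le y₀
  obtain ⟨S, hS⟩ := exists_finset_sub_mem_cube y₀
  have hbound : ∀ᶠ y in 𝓝 y₀, ∀ α, cubeNorm (ENNReal.ofReal p) ϑ (fun x => f (x - y)) α ≤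
      ENNReal.ofReal C * ∑ s ∈ S, cubeNorm (ENNReal.ofReal p) ϑ f (α + s) := by
    filter_upwards [hC, hS] with y hyC hyS α
    exact (cubeNorm_translate_le hP hϑ hf.1 (hyS α)).trans (by gcongr)
  refine tendsto_amalgamNorm_zero_of_dominated hq
    (fun α => 2 * (ENNReal.ofReal C * ∑ s ∈ S, cubeNorm (ENNReal.ofReal p) ϑ f (α + s))) ?_ ?_
    (tendsto_cubeNorm_translate_sub hp hq hϑ hf y₀)
  · have hsum := tsum_rpow_sum_add_ne_top hq (hf.tsum_cubeNorm_rpow_ne_top hq) S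
    simp only [ENNReal.mul_rpow_of_nonneg _ _ hq.le, ENNReal.tsum_mul_left]
    finiteness
  · have hmeas (y : Fin d → ℝ) : Measurable fun x => f (x - y) :=
      hf.1.comp (measurable_id.sub_const y)
    filter_upwards [hbound] with y hy α
    rw [two_mul]
    exact (cubeNorm_sub_le hP hϑ.1 (hmeas y) (hmeas y₀) α).trans
      (add_le_add (hy α) (hbound.self_of_nhds α))

theorem tendsto_amalgamNorm_mul_of_tendsto_zero {Y : Type*} {l : Filter Y}
    [l.IsCountablyGenerated] (hp : 0 < p) (hq : 0 < q) (hω : Measurable ω)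
    (hg : MemAmalgam p q ω g) {m : Y → (Fin d → ℝ) → ℂ} {C : ℝ}
    (hmeas : ∀ᶠ y in l, Measurable (m y)) (hm : ∀ᶠ y in l, ∀ ξ, ‖m y ξ‖ ≤ C)
    (hlim : ∀ ξ, Tendsto (fun y => m y ξ) l (𝓝 0)) :
    Tendsto (fun y => amalgamNorm p q ω (fun ξ => m y ξ * g ξ)) l (𝓝 0) := by
  have hpointwise : ∀ᶠ y in l, ∀ ξ, ‖ω ξ • (m y ξ * g ξ)‖ ≤ C * ‖ω ξ • g ξ‖ := by
    filter_upwards [hm] with y hy ξ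
    rw [← mul_smul_comm, norm_mul]
    gcongr
    exact hy ξ
  refine tendsto_amalgamNorm_zero_of_dominated hq
    (fun α => ENNReal.ofReal C * cubeNorm (ENNReal.ofReal p) ω g α) ?_
    (hpointwise.mono fun y hy α => eLpNorm_le_mul_eLpNorm_of_ae_le_mul (.of_forall hy) _)
    fun α => ?_
  · have hsum := hg.tsum_cubeNorm_rpow_ne_top hq
    simp only [ENNReal.mul_rpow_of_nonneg _ _ hq.le, ENNReal.tsum_mul_left]
    finiteness
  · have hgα : MemLp (fun ξ => ω ξ • g ξ) (ENNReal.ofReal p) (volume.restrict (cube α)) :=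
      ⟨(hω.smul hg.1).aestronglyMeasurable, (hg.cubeNorm_ne_top hq α).lt_top⟩
    refine tendsto_eLpNorm_zero_of_dominated (ENNReal.ofReal_pos.2 hp).ne' ENNReal.ofReal_ne_top
      (hgα.norm.const_mul C)
      (hmeas.mono fun y hy => (hω.smul (hy.mul hg.1)).aestronglyMeasurable)
      (hpointwise.mono fun y hy => .of_forall hy) (.of_forall fun ξ => ?_)
    simpa only [zero_mul, smul_zero] using ((hlim ξ).mul_const (g ξ)).const_smul (ω ξ)

end Amalgam

section Fourier

variable {d : ℕ} {f g : (Fin d → ℝ) → ℂ}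

lemma fourierT_eq_fourierIntegral (f : (Fin d → ℝ) → ℂ) :
    fourierT f =
      VectorFourier.fourierIntegral Real.fourierChar volume (dotProductBilin ℝ ℝ) f := by
  ext ξ
  rw [Real.vector_fourierIntegral_eq_integral_exp_smul]
  refine integral_congr_ae (.of_forall fun x => ?_)
  simp only [dotProductBilin_apply_apply, dotProduct, smul_eq_mul]
  congr 2
  push_cast
  ring

lemma fourierT_sub (hf : Integrable f) (hg : Integrable g) :
    fourierT (fun x => f x - g x) = fun ξ => fourierT f ξ - fourierT g ξ := by
  have hconv {h : (Fin d → ℝ) → ℂ} (hh : Integrable h) (ξ : Fin d → ℝ) :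
      Integrable fun x => Real.fourierChar (-dotProductBilin ℝ ℝ x ξ) • h x :=
    (VectorFourier.fourierIntegral_convergent_iff (L := dotProductBilin ℝ ℝ)
      Real.continuous_fourierChar (by simp only [dotProductBilin_apply_apply]; fun_prop) ξ).2 hh
  simp only [fourierT_eq_fourierIntegral]
  ext ξ
  simp only [VectorFourier.fourierIntegral, smul_sub]
  exact integral_sub (hconv hf ξ) (hconv hg ξ)

lemma fourierT_translate (f : (Fin d → ℝ) → ℂ) (y : Fin d → ℝ) :
    fourierT (fun x => f (x - y)) = fun ξ => Real.fourierChar (-(y ⬝ᵥ ξ)) * fourierT f ξ := by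
  simpa [fourierT_eq_fourierIntegral, Function.comp_def, sub_eq_add_neg, Circle.smul_def] using
    VectorFourier.fourierIntegral_comp_add_right Real.fourierChar volume
      (dotProductBilin ℝ ℝ) f (-y)

theorem tendsto_amalgamNorm_fourierT_translate_sub {q r : ℝ} (hq : 0 < q) (hr : 0 < r)
    {ω : (Fin d → ℝ) → ℝ} (hω : Measurable ω) (hf : Integrable f)
    (hfhat : MemAmalgam q r ω (fourierT f)) (y₀ : Fin d → ℝ) :
    Tendsto (fun y => amalgamNorm q r ω (fourierT fun x => f (x - y) - f (x - y₀)))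
      (𝓝 y₀) (𝓝 0) := by
  let χ (y ξ : Fin d → ℝ) : ℂ := Real.fourierChar (-(y ⬝ᵥ ξ))
  have hχ_left (ξ : Fin d → ℝ) : Continuous fun y => χ y ξ := by fun_prop
  have hχ_right (y : Fin d → ℝ) : Continuous (χ y) := by fun_prop
  have hmult (y : Fin d → ℝ) : fourierT (fun x => f (x - y) - f (x - y₀)) =
      fun ξ => (χ y ξ - χ y₀ ξ) * fourierT f ξ := by
    rw [fourierT_sub (hf.comp_sub_right y) (hf.comp_sub_right y₀), fourierT_translate,
      fourierT_translate]
    simp only [χ, sub_mul]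
  simp only [hmult]
  refine tendsto_amalgamNorm_mul_of_tendsto_zero (C := 1 + 1) hq hr hω hfhat
    (.of_forall fun y => ((hχ_right y).sub (hχ_right y₀)).measurable)
    (.of_forall fun y ξ => norm_sub_le_of_le (Circle.norm_coe _).le (Circle.norm_coe _).le)
    fun ξ => ?_
  simpa only [sub_self] using ((hχ_left ξ).tendsto y₀).sub_const (χ y₀ ξ)

end Fourier

theorem A_translation_continuous_general {d : ℕ} (p q r : ℝ) (hp : 1 ≤ p) (hq : 0 < q)
    (hr : 0 < r) (ϑ₁ ϑ₂ : (Fin d → ℝ) → ℝ) (h1 : IsBeurling ϑ₁) (h2 : Measurable ϑ₂)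
    (f : (Fin d → ℝ) → ℂ) (hf : MemA p q r ϑ₁ ϑ₂ f) :
    (∀ y₀ : Fin d → ℝ,
      Tendsto (fun y : Fin d → ℝ =>
          ANorm p q r ϑ₁ ϑ₂ (fun x => f (x - y) - f (x - y₀))) (𝓝 y₀) (𝓝 0)) ∧
    (∀ ε : ℝ, 0 < ε → ∃ U ∈ 𝓝 (0 : Fin d → ℝ), ∀ y ∈ U,
      ANorm p q r ϑ₁ ϑ₂ (fun x => f (x - y) - f x) < ENNReal.ofReal ε) := by
  have hcont (y₀ : Fin d → ℝ) : Tendsto (fun y =>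
      ANorm p q r ϑ₁ ϑ₂ (fun x => f (x - y) - f (x - y₀))) (𝓝 y₀) (𝓝 0) := by
    have htranslate := tendsto_amalgamNorm_translate_sub hp one_pos h1 hf.1 y₀
    have hmodulate := tendsto_amalgamNorm_fourierT_translate_sub hq hr h2
      (hf.1.integrable hp h1.2.1) hf.2 y₀
    simpa only [add_zero, ANorm] using htranslate.add hmodulate
  refine ⟨hcont, fun ε hε => ?_⟩
  have hsmall := (hcont 0).eventually_lt_const (ENNReal.ofReal_pos.2 hε)
  simp only [sub_zero] at hsmall
  exact ⟨_, hsmall, fun _ hy => hy⟩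

/-- the map `y ↦ T_y f` is continuous from `ℝ^d` into
`A^{p,1,q,r}_{ϑ₁,ϑ₂}(ℝ^d)`; in particular `‖T_y f − f‖_A < ε` for `y` near `0`. -/
theorem A_translation_continuous {d : ℕ} (p q r : ℝ) (hp : 1 ≤ p) (hq : 1 ≤ q) (hr : 1 ≤ r)
    (ϑ₁ ϑ₂ : (Fin d → ℝ) → ℝ) (h1 : IsBeurling ϑ₁) (h2 : IsBeurling ϑ₂)
    (f : (Fin d → ℝ) → ℂ) (hf : MemA p q r ϑ₁ ϑ₂ f) :
    (∀ y₀ : Fin d → ℝ,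
      Tendsto (fun y : Fin d → ℝ =>
          ANorm p q r ϑ₁ ϑ₂ (fun x => f (x - y) - f (x - y₀))) (nhds y₀) (nhds 0)) ∧
    (∀ ε : ℝ, 0 < ε → ∃ U ∈ nhds (0 : Fin d → ℝ), ∀ y ∈ U,
      ANorm p q r ϑ₁ ϑ₂ (fun x => f (x - y) - f x) < ENNReal.ofReal ε) :=
  A_translation_continuous_general p q r hp (by linarith) (by linarith) ϑ₁ ϑ₂ h1 h2.1 f hf
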